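/- arXiv:1506.06253 — 3 statements merged into one kernel-verified Lean document; each statement's English description precedes it below -/
import Mathlib

section
/- Let P be a point not lying on any extended side of ABC or of its anticomplementary triangle K⁻¹(ABC), and not on the Steiner circumellipse. Then the point O = T_{P′}⁻¹(K(Q)) satisfies OD₀ ∥ QD, OE₀ ∥ QE, OF₀ ∥ QF (so O is the generalized circumcenter of P), and the point H = K⁻¹(O) = K⁻¹(T_{P′}⁻¹(K(Q))) satisfies AH ∥ QD, BH ∥ QE, CH ∥ QF (so H is the generalized orthocenter of P). -/
noncomputable section

/-- The real affine plane. -/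
abbrev Pt : Type := ℝ × ℝ

/-- `u` and `v` are parallel vectors (the zero vector is parallel to everything). -/
def Par (u v : Pt) : Prop := ∃ t : ℝ, u = t • v ∨ v = t • u

/-- The centroid of the triangle `ABC`. -/
def cent (A B C : Pt) : Pt := (3⁻¹ : ℝ) • (A + B + C)

/-- The homothety with center `Z` and ratio `r`. -/
def homoth (Z : Pt) (r : ℝ) (X : Pt) : Pt := Z + r • (X - Z)

/-- The value at `p` of the quadratic polynomial with coefficient vector `c`. -/
def qval (c : Fin 6 → ℝ) (p : Pt) : ℝ :=
  c 0 * p.1 ^ 2 + c 1 * p.1 * p.2 + c 2 * p.2 ^ 2 + c 3 * p.1 + c 4 * p.2 + c 5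

/-- `S` is a conic: the zero locus of a real polynomial of total degree 2. -/
def IsConic (S : Set Pt) : Prop :=
  ∃ c : Fin 6 → ℝ, ¬(c 0 = 0 ∧ c 1 = 0 ∧ c 2 = 0) ∧ S = {p | qval c p = 0}

/-- `Z` is a center of symmetry of `S`. -/
def IsCenterOf (Z : Pt) (S : Set Pt) : Prop :=
  ∀ p ∈ S, (2 : ℝ) • Z - p ∈ S

/-- The gradient at `p` of the quadratic polynomial with coefficients `c`. -/
def qgrad (c : Fin 6 → ℝ) (p : Pt) : Pt :=
  (2 * c 0 * p.1 + c 1 * p.2 + c 3, c 1 * p.1 + 2 * c 2 * p.2 + c 4)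

/-- The line through `X` and `Y`. -/
def lineThru (X Y : Pt) : Set Pt := {p | ∃ t : ℝ, p = X + t • (Y - X)}

/-- `L` is the tangent line at the nonsingular point `p` of the conic with coefficients `c`. -/
def IsTangentLineAt (c : Fin 6 → ℝ) (L : Set Pt) (p : Pt) : Prop :=
  qval c p = 0 ∧ qgrad c p ≠ 0 ∧
  L = {q | (qgrad c p).1 * (q.1 - p.1) + (qgrad c p).2 * (q.2 - p.2) = 0}

/-!
Write `T` for `T_{P′}` and let `M = T(D₀)` be the midpoint of `E₃F₃`. Since `T` preserves
barycentric coordinates, a computation gives `T(Q) = P′`. Moreover `T(Q) - T(D)` is a nonzero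
multiple of `D₀ - M`, and `T(O) - T(D₀) = K(Q) - M` is a multiple of `D₀ - M`, so `T` maps `OD₀`
and `QD` to parallel lines, whence `OD₀ ∥ QD` by injectivity. Finally `AH` is parallel to `OD₀`
because `K⁻¹` sends `O` to `H` and `D₀` to `A`. The other two vertices follow by cyclic
symmetry.
-/

theorem barycentric_coords_unique {R V : Type*} [Ring R] [AddCommGroup V] [Module R V] {A B C : V}
    (hABC : AffineIndependent R ![A, B, C]) {x y z x' y' z' : R}
    (hsum : x + y + z = x' + y' + z')
    (h : x • A + y • B + z • C = x' • A + y' • B + z' • C) : x = x' ∧ y = y' ∧ z = z' := by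
  have hcoord := hABC.eq_of_sum_eq_sum (s := Finset.univ) (w₁ := ![x, y, z]) (w₂ := ![x', y', z'])
    (by simpa [Fin.sum_univ_three] using hsum) (by simpa [Fin.sum_univ_three] using h)
  exact ⟨hcoord 0 (Finset.mem_univ _), hcoord 1 (Finset.mem_univ _), hcoord 2 (Finset.mem_univ _)⟩

theorem exists_eq_lineMap_of_collinear {k V P : Type*} [DivisionRing k] [AddCommGroup V]
    [Module k V] [AddTorsor V P] {X Y Z : P} (h : Collinear k {X, Y, Z}) (hXY : X ≠ Y) :
    ∃ t : k, Z = AffineMap.lineMap X Y t := by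
  have hZ : Z ∈ line[k, X, Y] :=
    h.mem_affineSpan_of_mem_of_ne (by simp) (by simp) (by simp) hXY
  obtain ⟨t, ht⟩ := mem_affineSpan_pair_iff_exists_lineMap_eq.1 hZ
  exact ⟨t, ht.symm⟩

section Barycentric

variable {k V W : Type*} [Field k] [AddCommGroup V] [Module k V] [AddCommGroup W] [Module k W]

/-- The point with homogeneous barycentric coordinates `(x : y : z)` with respect to `ABC`. When
`x + y + z = 0`, that is, for a point at infinity, it takes the junk value `0`. -/
def baryPoint (A B C : V) (x y z : k) : V :=
  (x + y + z)⁻¹ • (x • A + y • B + z • C)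

theorem baryPoint_of_sum_eq_one (A B C : V) {x y z : k} (hsum : x + y + z = 1) :
    baryPoint A B C x y z = x • A + y • B + z • C := by
  rw [baryPoint, hsum, inv_one, one_smul]

theorem baryPoint_rotate (A B C : V) (x y z : k) :
    baryPoint A B C x y z = baryPoint B C A y z x := by
  simp only [baryPoint, ← add_rotate x y z]
  module

theorem baryPoint_mul_left (A B C : V) (x y z : k) {c : k} (hc : c ≠ 0) :
    baryPoint A B C (c * x) (c * y) (c * z) = baryPoint A B C x y z := by
  have hsum : (c * x + c * y + c * z)⁻¹ = (x + y + z)⁻¹ * c⁻¹ := by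
    rw [← mul_add, ← mul_add, mul_inv_rev]
  simp only [baryPoint, hsum, mul_smul, ← smul_add, inv_smul_smul₀ hc]

theorem map_baryPoint (T : V →ᵃ[k] W) (A B C : V) {x y z : k} (hsum : x + y + z ≠ 0) :
    T (baryPoint A B C x y z) = baryPoint (T A) (T B) (T C) x y z := by
  have hfromA : baryPoint A B C x y z = (x + y + z)⁻¹ • (y • (B - A) + z • (C - A)) + A := by
    rw [baryPoint]
    match_scalars <;> field_simp
    ring
  rw [hfromA, ← vadd_eq_add, T.map_vadd]
  simp only [map_smul, map_add, ← vsub_eq_sub, T.linearMap_vsub]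
  simp only [vsub_eq_sub, vadd_eq_add, baryPoint]
  match_scalars <;> field_simp
  ring

theorem cevian_trace_eq_baryPoint {A B C P D : V} {x y z : k}
    (hABC : AffineIndependent k ![A, B, C]) (hsum : x + y + z ≠ 0) (hyz : y + z ≠ 0)
    (hP : P = baryPoint A B C x y z) (hAPD : Collinear k {A, P, D})
    (hBCD : Collinear k {B, C, D}) : D = baryPoint A B C 0 y z := by
  have hBC : B ≠ C := hABC.injective.ne (show (1 : Fin 3) ≠ 2 by decide)
  have hAP : A ≠ P := by
    rintro rfl
    have hcoords : (x + y + z) • A + (0 : k) • B + (0 : k) • C = x • A + y • B + z • C := by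
      nth_rw 1 [hP, baryPoint, smul_inv_smul₀ hsum]
      module
    obtain ⟨-, hy, hz⟩ := barycentric_coords_unique hABC (by ring) hcoords
    exact hyz (by rw [← hy, ← hz, add_zero])
  obtain ⟨t, ht⟩ := exists_eq_lineMap_of_collinear hBCD hBC
  obtain ⟨r, hr⟩ := exists_eq_lineMap_of_collinear hAPD hAP
  rw [AffineMap.lineMap_apply_module] at ht hr
  rw [hP, baryPoint] at hr
  set c := r * (x + y + z)⁻¹ with hc
  have hcoords : (1 - r + c * x) • A + (c * y) • B + (c * z) • C =
      (0 : k) • A + (1 - t) • B + t • C := by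
    linear_combination (norm := module) ht - hr
  obtain ⟨-, hB, hC⟩ := barycentric_coords_unique hABC (by rw [hc]; field_simp; ring) hcoords
  have hcyz : c * (y + z) = 1 := by linear_combination hB + hC
  rw [ht, baryPoint, ← hB, ← hC, eq_inv_of_mul_eq_one_left hcyz, zero_add]
  module

/-- The isotomic conjugate of the point with barycentric coordinates `(x : y : z)`; it takes the
junk value `0` for points on the Steiner circumellipse. -/
def isotomicConj (A B C : V) (x y z : k) : V :=
  baryPoint A B C (y * z) (z * x) (x * y)

theorem isotomicConj_eq_add (A B C : V) (x y z : k) :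
    isotomicConj A B C x y z = (y * z / (x * y + y * z + z * x)) • A
      + (x * z / (x * y + y * z + z * x)) • B + (x * y / (x * y + y * z + z * x)) • C := by
  rw [isotomicConj, baryPoint, add_rotate (x * y)]
  module

theorem isotomicConj_rotate (A B C : V) (x y z : k) :
    isotomicConj A B C x y z = isotomicConj B C A y z x :=
  baryPoint_rotate A B C _ _ _

theorem cevian_trace_isotomicConj_eq_baryPoint {A B C D₃ : V} {x y z : k}
    (hABC : AffineIndependent k ![A, B, C]) (hx : x ≠ 0) (hyz : y + z ≠ 0)
    (hs : y * z + z * x + x * y ≠ 0) (hAPD : Collinear k {A, isotomicConj A B C x y z, D₃})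
    (hBCD : Collinear k {B, C, D₃}) : D₃ = baryPoint A B C 0 z y := by
  have hzxy : z * x + x * y ≠ 0 := by
    convert mul_ne_zero hx hyz using 1
    ring
  rw [cevian_trace_eq_baryPoint hABC hs hzxy rfl hAPD hBCD, ← baryPoint_mul_left A B C 0 z y hx,
    mul_zero, mul_comm z x]

/-- `(x : y : z)` are the barycentric coordinates of a point of the affine plane that lies neither
on a side of the reference triangle or of its anticomplementary triangle, nor on the Steiner
circumellipse. -/
structure GenericCoords (x y z : k) : Prop where
  sum_ne : x + y + z ≠ 0
  x_ne : x ≠ 0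
  y_ne : y ≠ 0
  z_ne : z ≠ 0
  yz_ne : y + z ≠ 0
  zx_ne : z + x ≠ 0
  xy_ne : x + y ≠ 0
  steiner_ne : y * z + z * x + x * y ≠ 0

theorem GenericCoords.rotate {x y z : k} (h : GenericCoords x y z) : GenericCoords y z x where
  sum_ne := add_rotate x y z ▸ h.sum_ne
  x_ne := h.y_ne
  y_ne := h.z_ne
  z_ne := h.x_ne
  yz_ne := h.zx_ne
  zx_ne := h.xy_ne
  xy_ne := h.yz_ne
  steiner_ne := add_rotate (y * z) (z * x) (x * y) ▸ h.steiner_ne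

theorem GenericCoords.of_sum_eq_one {x y z : k} (hsum : x + y + z = 1) (hx0 : x ≠ 0) (hy0 : y ≠ 0)
    (hz0 : z ≠ 0) (hx1 : x ≠ 1) (hy1 : y ≠ 1) (hz1 : z ≠ 1)
    (hs : y * z + z * x + x * y ≠ 0) : GenericCoords x y z where
  sum_ne := hsum ▸ one_ne_zero
  x_ne := hx0
  y_ne := hy0
  z_ne := hz0
  yz_ne h := hx1 (by linear_combination hsum - h)
  zx_ne h := hy1 (by linear_combination hsum - h)
  xy_ne h := hz1 (by linear_combination hsum - h)
  steiner_ne := hs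

/-- `T` is the affine map `T_{P′}` taking `A`, `B`, `C` to the traces of the isotomic conjugate `P′`
of the point with barycentric coordinates `(x : y : z)`; these traces have coordinates
`(0 : z : y)`, `(z : 0 : x)`, `(y : x : 0)`, written here in cyclically rotated form. -/
structure IsIsotomicCevianMap (A B C : V) (x y z : k) (T : V →ᵃ[k] V) : Prop where
  map_A : T A = baryPoint A B C 0 z y
  map_B : T B = baryPoint B C A 0 x z
  map_C : T C = baryPoint C A B 0 y x

theorem IsIsotomicCevianMap.rotate {A B C : V} {x y z : k} {T : V →ᵃ[k] V}
    (hT : IsIsotomicCevianMap A B C x y z T) : IsIsotomicCevianMap B C A y z x T :=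
  ⟨hT.map_B, hT.map_C, hT.map_A⟩

theorem IsIsotomicCevianMap.of_collinear {A B C : V} {x y z : k} {T : V →ᵃ[k] V}
    (hABC : AffineIndependent k ![A, B, C]) (h : GenericCoords x y z)
    (hA : Collinear k {A, isotomicConj A B C x y z, T A} ∧ Collinear k {B, C, T A})
    (hB : Collinear k {B, isotomicConj A B C x y z, T B} ∧ Collinear k {C, A, T B})
    (hC : Collinear k {C, isotomicConj A B C x y z, T C} ∧ Collinear k {A, B, T C}) :
    IsIsotomicCevianMap A B C x y z T := by
  have hBCA := hABC.comm_left.comm_right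
  have hCAB := hBCA.comm_left.comm_right
  rw [isotomicConj_rotate] at hB
  rw [isotomicConj_rotate, isotomicConj_rotate] at hC
  exact ⟨cevian_trace_isotomicConj_eq_baryPoint hABC h.x_ne h.yz_ne h.steiner_ne hA.1 hA.2,
    cevian_trace_isotomicConj_eq_baryPoint hBCA h.y_ne h.zx_ne h.rotate.steiner_ne hB.1 hB.2,
    cevian_trace_isotomicConj_eq_baryPoint hCAB h.z_ne h.xy_ne h.rotate.rotate.steiner_ne hC.1 hC.2⟩

end Barycentric

section Complement

variable {k V : Type*} [Field k] [AddCommGroup V] [Module k V]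

variable (k) in
/-- The anticomplement `K⁻¹(X)`: the image of `X` under the homothety with ratio `-2` centred at the
centroid of `ABC`, written without the centroid so as to make sense in characteristic `3`. -/
def anticomplement (A B C X : V) : V :=
  A + B + C - (2 : k) • X

theorem anticomplement_rotate (A B C X : V) :
    anticomplement k A B C X = anticomplement k B C A X := by
  rw [anticomplement, anticomplement, add_rotate]

variable [Invertible (2 : k)]

variable (k) in
/-- The complement `K(X)`: the image of `X` under the homothety with ratio `-1/2` centred at the
centroid of `ABC`, written without the centroid so as to make sense in characteristic `3`. -/
def complement (A B C X : V) : V :=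
  (⅟2 : k) • (A + B + C - X)

theorem complement_rotate (A B C X : V) : complement k A B C X = complement k B C A X := by
  rw [complement, complement, add_rotate]

theorem anticomplement_sub_vertex (A B C O : V) :
    anticomplement k A B C O - A = (2 : k) • (midpoint k B C - O) := by
  rw [anticomplement, midpoint_eq_smul_add]
  match_scalars <;> simp

/-- The isotomcomplement `Q = K(P′)` of the point `P` with barycentric coordinates `(x : y : z)`. -/
def isotomcomplement (A B C : V) (x y z : k) : V :=
  complement k A B C (isotomicConj A B C x y z)

theorem isotomcomplement_rotate (A B C : V) (x y z : k) :
    isotomcomplement A B C x y z = isotomcomplement B C A y z x := by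
  rw [isotomcomplement, complement_rotate, isotomicConj_rotate, isotomcomplement]

theorem isotomcomplement_eq_baryPoint (A B C : V) {x y z : k} (hs : y * z + z * x + x * y ≠ 0) :
    isotomcomplement A B C x y z =
      baryPoint A B C (x * (y + z)) (y * (z + x)) (z * (x + y)) := by
  have h2 := Invertible.ne_zero (2 : k)
  have hsum : x * (y + z) + y * (z + x) + z * (x + y) = 2 * (y * z + z * x + x * y) := by ring
  simp only [isotomcomplement, complement, isotomicConj, baryPoint, hsum, invOf_eq_inv]
  generalize hs' : y * z + z * x + x * y = s at hs ⊢
  match_scalars <;> field_simp <;> rw [← hs'] <;> ring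

namespace IsIsotomicCevianMap

variable {A B C : V} {x y z : k} {T : V →ᵃ[k] V}

theorem map_isotomcomplement (hT : IsIsotomicCevianMap A B C x y z T) (hyz : y + z ≠ 0)
    (hzx : z + x ≠ 0) (hxy : x + y ≠ 0) (hs : y * z + z * x + x * y ≠ 0) :
    T (isotomcomplement A B C x y z) = isotomicConj A B C x y z := by
  have h2 := Invertible.ne_zero (2 : k)
  have hsum : x * (y + z) + y * (z + x) + z * (x + y) = 2 * (y * z + z * x + x * y) := by ring
  have hsum_ne : x * (y + z) + y * (z + x) + z * (x + y) ≠ 0 :=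
    hsum ▸ mul_ne_zero h2 hs
  rw [isotomcomplement_eq_baryPoint A B C hs, map_baryPoint T A B C hsum_ne, hT.map_A,
    hT.map_B, hT.map_C]
  simp only [isotomicConj, baryPoint, hsum, zero_add, add_comm z y, add_comm x z, add_comm y x]
  match_scalars <;> field_simp <;> ring

theorem isotomicConj_sub_map_trace (hT : IsIsotomicCevianMap A B C x y z T) (hyz : y + z ≠ 0)
    (hzx : z + x ≠ 0) (hxy : x + y ≠ 0) (hs : y * z + z * x + x * y ≠ 0) :
    isotomicConj A B C x y z - T (baryPoint A B C 0 y z) =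
      (2 * (x * y * z) / ((y * z + z * x + x * y) * (y + z))) •
        (midpoint k B C - T (midpoint k B C)) := by
  have h2 := Invertible.ne_zero (2 : k)
  rw [map_baryPoint T A B C (by rwa [zero_add]), T.map_midpoint, hT.map_B, hT.map_C]
  simp only [isotomicConj, baryPoint, midpoint_eq_smul_add, invOf_eq_inv, zero_add, zero_smul,
    add_comm x z, add_comm y x]
  generalize hs' : y * z + z * x + x * y = s at hs ⊢
  match_scalars <;> field_simp <;> rw [← hs'] <;> ring

theorem complement_isotomcomplement_sub_map_midpoint (hT : IsIsotomicCevianMap A B C x y z T)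
    (hzx : z + x ≠ 0) (hxy : x + y ≠ 0) (hs : y * z + z * x + x * y ≠ 0) :
    complement k A B C (isotomcomplement A B C x y z) - T (midpoint k B C) =
      ((y * z + z * x + x * y - x ^ 2) / (2 * (y * z + z * x + x * y))) •
        (midpoint k B C - T (midpoint k B C)) := by
  have h2 := Invertible.ne_zero (2 : k)
  rw [T.map_midpoint, hT.map_B, hT.map_C]
  simp only [isotomcomplement, complement, isotomicConj, baryPoint, midpoint_eq_smul_add,
    invOf_eq_inv, zero_add, add_comm x z, add_comm y x]
  generalize hs' : y * z + z * x + x * y = s at hs ⊢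
  match_scalars <;> field_simp <;> rw [← hs'] <;> ring

theorem midpoint_sub_circumcenter_mem_span {O : V} (hT : IsIsotomicCevianMap A B C x y z T)
    (hinj : Function.Injective T) (h : GenericCoords x y z)
    (hO : T O = complement k A B C (isotomcomplement A B C x y z)) :
    midpoint k B C - O ∈ k ∙ (baryPoint A B C 0 y z - isotomcomplement A B C x y z) := by
  obtain ⟨-, hx, hy, hz, hyz, hzx, hxy, hs⟩ := h
  have hTQD := hT.isotomicConj_sub_map_trace hyz hzx hxy hs
  have hTOM := hT.complement_isotomcomplement_sub_map_midpoint hzx hxy hs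
  rw [← hT.map_isotomcomplement hyz hzx hxy hs] at hTQD
  rw [← hO] at hTOM
  set D := baryPoint A B C 0 y z
  set Q := isotomcomplement A B C x y z
  set c := 2 * (x * y * z) / ((y * z + z * x + x * y) * (y + z))
  set e := (y * z + z * x + x * y - x ^ 2) / (2 * (y * z + z * x + x * y))
  have hc : c ≠ 0 := div_ne_zero
    (mul_ne_zero (Invertible.ne_zero 2) (mul_ne_zero (mul_ne_zero hx hy) hz)) (mul_ne_zero hs hyz)
  have hlinear : T.linear ((e / c) • (D - Q)) = T.linear (midpoint k B C - O) := by
    simp only [map_smul, ← vsub_eq_sub, T.linearMap_vsub]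
    simp only [vsub_eq_sub]
    rw [← neg_sub (T Q), hTQD, ← neg_sub (T O), hTOM, smul_neg, smul_smul, div_mul_cancel₀ e hc]
  exact Submodule.mem_span_singleton.2 ⟨e / c, T.linear_injective_iff.2 hinj hlinear⟩

theorem midpoint_sub_and_sub_vertex_mem_span {P Q D O H : V}
    (hT : IsIsotomicCevianMap A B C x y z T) (hABC : AffineIndependent k ![A, B, C])
    (hinj : Function.Injective T) (h : GenericCoords x y z) (hP : P = baryPoint A B C x y z)
    (hQ : Q = isotomcomplement A B C x y z) (hD : Collinear k {A, P, D} ∧ Collinear k {B, C, D})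
    (hO : T O = complement k A B C Q) (hH : H = anticomplement k A B C O) :
    midpoint k B C - O ∈ k ∙ (D - Q) ∧ H - A ∈ k ∙ (D - Q) := by
  have hmid : midpoint k B C - O ∈ k ∙ (D - Q) := by
    rw [cevian_trace_eq_baryPoint hABC h.sum_ne h.yz_ne hP hD.1 hD.2, hQ]
    exact hT.midpoint_sub_circumcenter_mem_span hinj h (hQ ▸ hO)
  rw [hH, anticomplement_sub_vertex]
  exact ⟨hmid, Submodule.smul_mem _ _ hmid⟩

end IsIsotomicCevianMap

theorem generalized_circumcenter_orthocenter_formulas_general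
    {A B C P P' Q D E F D₃ E₃ F₃ O H : V} {x y z : k}
    (hABC : AffineIndependent k ![A, B, C]) (h : GenericCoords x y z)
    (hP : P = baryPoint A B C x y z) (hP' : P' = isotomicConj A B C x y z)
    (hQ : Q = complement k A B C P')
    (hD : Collinear k {A, P, D} ∧ Collinear k {B, C, D})
    (hE : Collinear k {B, P, E} ∧ Collinear k {C, A, E})
    (hF : Collinear k {C, P, F} ∧ Collinear k {A, B, F})
    (hD₃ : Collinear k {A, P', D₃} ∧ Collinear k {B, C, D₃})
    (hE₃ : Collinear k {B, P', E₃} ∧ Collinear k {C, A, E₃})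
    (hF₃ : Collinear k {C, P', F₃} ∧ Collinear k {A, B, F₃})
    {T : V →ᵃ[k] V} (hinj : Function.Injective T) (hTABC : T A = D₃ ∧ T B = E₃ ∧ T C = F₃)
    (hO : T O = complement k A B C Q) (hH : H = anticomplement k A B C O) :
    midpoint k B C - O ∈ k ∙ (D - Q) ∧
    midpoint k C A - O ∈ k ∙ (E - Q) ∧
    midpoint k A B - O ∈ k ∙ (F - Q) ∧
    H - A ∈ k ∙ (D - Q) ∧ H - B ∈ k ∙ (E - Q) ∧ H - C ∈ k ∙ (F - Q) := by
  obtain ⟨rfl, rfl, rfl⟩ := hTABC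
  subst hP'
  have hT := IsIsotomicCevianMap.of_collinear hABC h hD₃ hE₃ hF₃
  have hBCA := hABC.comm_left.comm_right
  have hCAB := hBCA.comm_left.comm_right
  have hP_B := hP.trans (baryPoint_rotate A B C x y z)
  have hP_C := hP_B.trans (baryPoint_rotate B C A y z x)
  have hQ_B := hQ.trans (isotomcomplement_rotate A B C x y z)
  have hQ_C := hQ_B.trans (isotomcomplement_rotate B C A y z x)
  have hO_B := hO.trans (complement_rotate A B C Q)
  have hO_C := hO_B.trans (complement_rotate B C A Q)
  have hH_B := hH.trans (anticomplement_rotate A B C O)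
  have hH_C := hH_B.trans (anticomplement_rotate B C A O)
  obtain ⟨hOD, hHA⟩ := hT.midpoint_sub_and_sub_vertex_mem_span hABC hinj h hP hQ hD hO hH
  obtain ⟨hOE, hHB⟩ := hT.rotate.midpoint_sub_and_sub_vertex_mem_span hBCA hinj h.rotate
    hP_B hQ_B hE hO_B hH_B
  obtain ⟨hOF, hHC⟩ := hT.rotate.rotate.midpoint_sub_and_sub_vertex_mem_span hCAB hinj
    h.rotate.rotate hP_C hQ_C hF hO_C hH_C
  exact ⟨hOD, hOE, hOF, hHA, hHB, hHC⟩

end Complement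

theorem homoth_cent_neg_half (A B C X : Pt) :
    homoth (cent A B C) (-(1 / 2)) X = complement ℝ A B C X := by
  simp only [homoth, cent, complement, invOf_eq_inv]
  module

theorem homoth_cent_neg_two (A B C X : Pt) :
    homoth (cent A B C) (-2) X = anticomplement ℝ A B C X := by
  simp only [homoth, cent, anticomplement]
  module

theorem par_of_mem_span {u v : Pt} (h : u ∈ ℝ ∙ v) : Par u v := by
  obtain ⟨t, ht⟩ := Submodule.mem_span_singleton.1 h
  exact ⟨t, Or.inl ht.symm⟩

theorem generalized_circumcenter_orthocenter_formulas
    (A B C P P' Q Q' D E F D₃ E₃ F₃ : Pt) (x y z : ℝ)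
    (hABC : AffineIndependent ℝ ![A, B, C])
    (hsum : x + y + z = 1)
    (hPco : P = x • A + y • B + z • C)
    (hx0 : x ≠ 0) (hy0 : y ≠ 0) (hz0 : z ≠ 0)
    (hx1 : x ≠ 1) (hy1 : y ≠ 1) (hz1 : z ≠ 1)
    (hst : x * y + y * z + z * x ≠ 0)
    (hP' : P' = (y * z / (x * y + y * z + z * x)) • A
        + (x * z / (x * y + y * z + z * x)) • B
        + (x * y / (x * y + y * z + z * x)) • C)
    (hQ : Q = homoth (cent A B C) (-(1 / 2)) P')
    (hQ' : Q' = homoth (cent A B C) (-(1 / 2)) P)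
    (hD : Collinear ℝ {A, P, D} ∧ Collinear ℝ {B, C, D})
    (hE : Collinear ℝ {B, P, E} ∧ Collinear ℝ {A, C, E})
    (hF : Collinear ℝ {C, P, F} ∧ Collinear ℝ {A, B, F})
    (hD₃ : Collinear ℝ {A, P', D₃} ∧ Collinear ℝ {B, C, D₃})
    (hE₃ : Collinear ℝ {B, P', E₃} ∧ Collinear ℝ {A, C, E₃})
    (hF₃ : Collinear ℝ {C, P', F₃} ∧ Collinear ℝ {A, B, F₃})
    (TP' : Pt ≃ᵃ[ℝ] Pt) (hTP' : TP' A = D₃ ∧ TP' B = E₃ ∧ TP' C = F₃)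
    (O H : Pt)
    (hO : O = TP'.symm (homoth (cent A B C) (-(1 / 2)) Q))
    (hH : H = homoth (cent A B C) (-2) O) :
    Par (midpoint ℝ B C - O) (D - Q) ∧
    Par (midpoint ℝ C A - O) (E - Q) ∧
    Par (midpoint ℝ A B - O) (F - Q) ∧
    Par (H - A) (D - Q) ∧ Par (H - B) (E - Q) ∧ Par (H - C) (F - Q) := by
  rw [Set.insert_comm A C] at hE hE₃
  rw [← baryPoint_of_sum_eq_one A B C hsum] at hPco
  rw [← isotomicConj_eq_add] at hP'
  rw [homoth_cent_neg_half] at hQ hO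
  rw [homoth_cent_neg_two] at hH
  have hgeneric : GenericCoords x y z :=
    .of_sum_eq_one hsum hx0 hy0 hz0 hx1 hy1 hz1 (add_rotate (x * y) (y * z) (z * x) ▸ hst)
  obtain ⟨hOD, hOE, hOF, hHA, hHB, hHC⟩ := generalized_circumcenter_orthocenter_formulas_general
    hABC hgeneric hPco hP' hQ hD hE hF hD₃ hE₃ hF₃ (T := TP'.toAffineMap) TP'.injective hTP'
    (TP'.symm_apply_eq.1 hO.symm).symm hH
  exact ⟨par_of_mem_span hOD, par_of_mem_span hOE, par_of_mem_span hOF,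
    par_of_mem_span hHA, par_of_mem_span hHB, par_of_mem_span hHC⟩
end
end

section
/- (a) The nine points D₀, E₀, F₀, D₃, E₃, F₃ and the midpoints of segments AP′, BP′, CP′ lie on a single conic N_{P′} (the nine-point conic of the quadrangle ABCP′), and the center of N_{P′} is K(Q). (b) The image T_{P′}⁻¹(N_{P′}) is a conic passing through A, B, C whose center is O = T_{P′}⁻¹(K(Q)); that is, T_{P′}⁻¹(N_{P′}) is the circumconic C̃_O of ABC with center O. -/
noncomputable section

/-!
Let `X = uA + vB + wC` with `u + v + w = 1`. The conic `f βγ + g γα + h αβ = 0` through `A, B, C`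
passes through `X` when `f vw + g wu + h uv = 0`, and its center `(α : β : γ)` determines it by
`f : g : h = α (β + γ - α) : β (γ + α - β) : γ (α + β - γ)`. Hence the centers of the conics through
`A, B, C, X` lie on the conic `vw α (β + γ - α) + wu β (γ + α - β) + uv γ (α + β - γ) = 0`, the
nine-point conic of the quadrangle `ABCX`. This equation is cyclically symmetric, so it suffices to
check it at the midpoint of `BC` and at the trace of `X` on `BC`. It is also invariant under
reflection in `(A + B + C + X) / 4 = K(K(X))`, which exchanges the midpoints of `BC` and `AX`. Being
a conic and having a given center are affine properties, so everything transfers to the preimage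
under `T_{P′}`.
-/

section Barycentric

variable {k V : Type*} [Field k] [AddCommGroup V] [Module k V] {A B C : V}

lemma eq_zero_of_smul_add_smul_add_smul_eq_zero (hABC : AffineIndependent k ![A, B, C])
    {α β γ : k} (hsum : α + β + γ = 0) (h : α • A + β • B + γ • C = 0) :
    α = 0 ∧ β = 0 ∧ γ = 0 := by
  have hzero := affineIndependent_iff.1 hABC Finset.univ ![α, β, γ]
    (by simpa [Fin.sum_univ_three] using hsum) (by simpa [Fin.sum_univ_three] using h)
  exact ⟨hzero 0 (by simp), hzero 1 (by simp), hzero 2 (by simp)⟩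

lemma eq_of_barycentric_eq (hABC : AffineIndependent k ![A, B, C]) {α β γ α' β' γ' : k}
    (hsum : α + β + γ = α' + β' + γ')
    (h : α • A + β • B + γ • C = α' • A + β' • B + γ' • C) : α = α' ∧ β = β' ∧ γ = γ' := by
  simpa only [sub_eq_zero] using eq_zero_of_smul_add_smul_add_smul_eq_zero hABC
    (α := α - α') (β := β - β') (γ := γ - γ') (by linear_combination hsum)
    (by rw [← sub_eq_zero.2 h]; module)

lemma smul_trace_eq (hABC : AffineIndependent k ![A, B, C]) {u v w : k} (hsum : u + v + w = 1)
    {D : V} (hAX : Collinear k {A, u • A + v • B + w • C, D}) (hBC : Collinear k {B, C, D}) :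
    (v + w) • D = v • B + w • C := by
  have hB_ne_C : B ≠ C := hABC.injective.ne (show (1 : Fin 3) ≠ 2 by decide)
  obtain ⟨t, rfl⟩ := mem_affineSpan_pair_iff_exists_lineMap_eq.1 <|
    hBC.mem_affineSpan_of_mem_of_ne (p₃ := D) (by simp) (by simp) (by simp) hB_ne_C
  rw [AffineMap.lineMap_apply_module] at hAX ⊢
  have hA_ne_D : A ≠ (1 - t) • B + t • C := fun h ↦ one_ne_zero
    (eq_of_barycentric_eq hABC (α := 1) (β := 0) (γ := 0) (α' := 0) (β' := 1 - t) (γ' := t)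
      (by ring) (by simpa using h)).1
  obtain ⟨r, hr⟩ := mem_affineSpan_pair_iff_exists_lineMap_eq.1 <|
    hAX.mem_affineSpan_of_mem_of_ne (p₃ := u • A + v • B + w • C)
      (by simp) (by simp) (by simp) hA_ne_D
  rw [AffineMap.lineMap_apply_module] at hr
  obtain ⟨-, rfl, rfl⟩ := eq_of_barycentric_eq hABC
    (α := 1 - r) (β := r * (1 - t)) (γ := r * t) (α' := u) (β' := v) (γ' := w)
    (by linear_combination -hsum) (by rw [← hr]; module)
  module

end Barycentric

section AffineInvariance

-- The right-hand side says that `qval c` is affine, in a form that affine maps visibly preserve.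
lemma leading_coeffs_eq_zero_iff (c : Fin 6 → ℝ) :
    (c 0 = 0 ∧ c 1 = 0 ∧ c 2 = 0) ↔
      ∀ p q : Pt, 2 * qval c (midpoint ℝ p q) = qval c p + qval c q := by
  have hdefect (p q : Pt) : qval c p + qval c q - 2 * qval c (midpoint ℝ p q) =
      (c 0 * (p.1 - q.1) ^ 2 + c 1 * (p.1 - q.1) * (p.2 - q.2) + c 2 * (p.2 - q.2) ^ 2) / 2 := by
    simp only [qval, midpoint_eq_smul_add, Prod.smul_fst, Prod.smul_snd, Prod.fst_add,
      Prod.snd_add, smul_eq_mul, invOf_eq_inv]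
    ring
  constructor
  · rintro ⟨h0, h1, h2⟩ p q
    have hpq := hdefect p q
    rw [h0, h1, h2] at hpq
    linarith
  · intro h
    have hquad (v : Pt) : c 0 * v.1 ^ 2 + c 1 * v.1 * v.2 + c 2 * v.2 ^ 2 = 0 := by
      have hv := hdefect v 0
      simp only [h, Prod.fst_zero, Prod.snd_zero, sub_zero, sub_self] at hv
      linarith
    have h0 : c 0 = 0 := by simpa using hquad (1, 0)
    have h2 : c 2 = 0 := by simpa using hquad (0, 1)
    exact ⟨h0, by simpa [h0, h2] using hquad (1, 1), h2⟩

lemma exists_qval_eq_qval_comp (c : Fin 6 → ℝ) (f : Pt →ᵃ[ℝ] Pt) :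
    ∃ c' : Fin 6 → ℝ, ∀ p, qval c' p = qval c (f p) := by
  obtain ⟨a₁, a₂, ha⟩ : ∃ a₁ a₂, f.linear (1, 0) = (a₁, a₂) := ⟨_, _, rfl⟩
  obtain ⟨b₁, b₂, hb⟩ : ∃ b₁ b₂, f.linear (0, 1) = (b₁, b₂) := ⟨_, _, rfl⟩
  obtain ⟨o₁, o₂, ho⟩ : ∃ o₁ o₂, f 0 = (o₁, o₂) := ⟨_, _, rfl⟩
  have hf (p : Pt) : f p = (p.1 * a₁ + p.2 * b₁ + o₁, p.1 * a₂ + p.2 * b₂ + o₂) := by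
    have hp : p = p.1 • ((1, 0) : Pt) + p.2 • ((0, 1) : Pt) := by ext <;> simp
    have hlin : f.linear p = p.1 • (a₁, a₂) + p.2 • (b₁, b₂) := by
      conv_lhs => rw [hp, map_add, map_smul, map_smul, ha, hb]
    rw [congrFun f.decomp p, Pi.add_apply, hlin, ho]
    rfl
  refine ⟨![c 0 * a₁ ^ 2 + c 1 * a₁ * a₂ + c 2 * a₂ ^ 2,
    2 * c 0 * a₁ * b₁ + c 1 * (a₁ * b₂ + a₂ * b₁) + 2 * c 2 * a₂ * b₂,
    c 0 * b₁ ^ 2 + c 1 * b₁ * b₂ + c 2 * b₂ ^ 2,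
    2 * c 0 * a₁ * o₁ + c 1 * (a₁ * o₂ + a₂ * o₁) + 2 * c 2 * a₂ * o₂ + c 3 * a₁ + c 4 * a₂,
    2 * c 0 * b₁ * o₁ + c 1 * (b₁ * o₂ + b₂ * o₁) + 2 * c 2 * b₂ * o₂ + c 3 * b₁ + c 4 * b₂,
    qval c (o₁, o₂)], fun p ↦ ?_⟩
  rw [hf]
  simp only [qval, Matrix.cons_val]
  ring

lemma IsConic.preimage {S : Set Pt} (hS : IsConic S) (e : Pt ≃ᵃ[ℝ] Pt) : IsConic (e ⁻¹' S) := by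
  obtain ⟨c, hc, rfl⟩ := hS
  obtain ⟨c', hc'⟩ := exists_qval_eq_qval_comp c e.toAffineMap
  refine ⟨c', fun h ↦ hc ?_, by ext p; simp [hc']⟩
  rw [leading_coeffs_eq_zero_iff] at h ⊢
  intro p q
  have hpq := h (e.symm p) (e.symm q)
  rw [← e.symm.map_midpoint] at hpq
  simpa [hc'] using hpq

lemma IsCenterOf.preimage {Z : Pt} {S : Set Pt} (f : Pt →ᵃ[ℝ] Pt) (h : IsCenterOf (f Z) S) :
    IsCenterOf Z (f ⁻¹' S) := by
  intro p hp
  have hreflect : f ((2 : ℝ) • Z - p) = (2 : ℝ) • f Z - f p := by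
    have hline (X Y : Pt) : AffineMap.lineMap X Y (2 : ℝ) = (2 : ℝ) • Y - X := by
      rw [AffineMap.lineMap_apply_module]
      module
    simpa only [hline] using f.apply_lineMap p Z 2
  rw [Set.mem_preimage, hreflect]
  exact h _ hp

end AffineInvariance

section NinePointConic

/-- The nine-point conic of the quadrangle `ABCX`, where `X = uA + vB + wC`, given by its equation
in normalized barycentric coordinates `(α, β, γ)` with respect to `ABC`. The equation is homogeneous
in `u`, `v`, `w`, so only their ratios matter. -/
def ninePointConic (A B C : Pt) (u v w : ℝ) : Set Pt :=
  {p | ∃ α β γ : ℝ, α + β + γ = 1 ∧ p = α • A + β • B + γ • C ∧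
    v * w * (α * (β + γ - α)) + w * u * (β * (γ + α - β)) + u * v * (γ * (α + β - γ)) = 0}

variable (A B C : Pt) (u v w : ℝ)

lemma ninePointConic_subset_rotate : ninePointConic A B C u v w ⊆ ninePointConic B C A v w u := by
  rintro _ ⟨α, β, γ, hsum, rfl, h⟩
  exact ⟨β, γ, α, by linarith, by module, by linear_combination h⟩

lemma ninePointConic_rotate : ninePointConic B C A v w u = ninePointConic A B C u v w :=
  ((ninePointConic_subset_rotate B C A v w u).trans
    (ninePointConic_subset_rotate C A B w u v)).antisymm (ninePointConic_subset_rotate A B C u v w)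

lemma midpoint_mem_ninePointConic : midpoint ℝ B C ∈ ninePointConic A B C u v w := by
  refine ⟨0, 1 / 2, 1 / 2, by norm_num, ?_, by ring⟩
  rw [midpoint_eq_smul_add, invOf_eq_inv]
  module

variable {A B C u v w}

lemma trace_mem_ninePointConic (hABC : AffineIndependent ℝ ![A, B, C]) (hsum : u + v + w = 1)
    (hu : u ≠ 1) {X D : Pt} (hX : X = u • A + v • B + w • C) (hAX : Collinear ℝ {A, X, D})
    (hBC : Collinear ℝ {B, C, D}) : D ∈ ninePointConic A B C u v w := by
  have hvw : v + w ≠ 0 := fun h ↦ hu (by linarith)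
  refine ⟨0, v / (v + w), w / (v + w), by field_simp; ring, ?_, by field_simp; ring⟩
  rw [(eq_inv_smul_iff₀ hvw).2 (smul_trace_eq hABC hsum (hX ▸ hAX) hBC)]
  module

lemma isCenterOf_ninePointConic (hsum : u + v + w = 1) {X : Pt}
    (hX : X = u • A + v • B + w • C) :
    IsCenterOf ((1 / 4 : ℝ) • (A + B + C + X)) (ninePointConic A B C u v w) := by
  subst hX
  rintro _ ⟨α, β, γ, hαβγ, rfl, h⟩
  refine ⟨(1 + u) / 2 - α, (1 + v) / 2 - β, (1 + w) / 2 - γ, by linarith, by module, ?_⟩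
  obtain rfl : w = 1 - u - v := by linarith
  obtain rfl : γ = 1 - α - β := by linarith
  linear_combination h

lemma midpoint_vertex_mem_ninePointConic (hsum : u + v + w = 1) {X : Pt}
    (hX : X = u • A + v • B + w • C) : midpoint ℝ A X ∈ ninePointConic A B C u v w := by
  convert isCenterOf_ninePointConic hsum hX _ (midpoint_mem_ninePointConic A B C u v w) using 1
  simp only [midpoint_eq_smul_add, invOf_eq_inv]
  module

lemma nine_points_mem_ninePointConic (hABC : AffineIndependent ℝ ![A, B, C])
    (hsum : u + v + w = 1) (hu : u ≠ 1) (hv : v ≠ 1) (hw : w ≠ 1) {X D E F : Pt}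
    (hX : X = u • A + v • B + w • C)
    (hD : Collinear ℝ {A, X, D} ∧ Collinear ℝ {B, C, D})
    (hE : Collinear ℝ {B, X, E} ∧ Collinear ℝ {C, A, E})
    (hF : Collinear ℝ {C, X, F} ∧ Collinear ℝ {A, B, F}) :
    (midpoint ℝ B C ∈ ninePointConic A B C u v w ∧ midpoint ℝ C A ∈ ninePointConic A B C u v w ∧
      midpoint ℝ A B ∈ ninePointConic A B C u v w) ∧
    (D ∈ ninePointConic A B C u v w ∧ E ∈ ninePointConic A B C u v w ∧
      F ∈ ninePointConic A B C u v w) ∧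
    (midpoint ℝ A X ∈ ninePointConic A B C u v w ∧ midpoint ℝ B X ∈ ninePointConic A B C u v w ∧
      midpoint ℝ C X ∈ ninePointConic A B C u v w) := by
  have hBCA : ninePointConic B C A v w u = ninePointConic A B C u v w := ninePointConic_rotate ..
  have hCAB : ninePointConic C A B w u v = ninePointConic A B C u v w :=
    (ninePointConic_rotate ..).symm
  have hsum_BCA : v + w + u = 1 := by linarith
  have hsum_CAB : w + u + v = 1 := by linarith
  have hX_BCA : X = v • B + w • C + u • A := by rw [hX]; module
  have hX_CAB : X = w • C + u • A + v • B := by rw [hX]; module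
  refine ⟨⟨midpoint_mem_ninePointConic .., ?_, ?_⟩,
    ⟨trace_mem_ninePointConic hABC hsum hu hX hD.1 hD.2, ?_, ?_⟩,
    ⟨midpoint_vertex_mem_ninePointConic hsum hX, ?_, ?_⟩⟩
  · exact hBCA ▸ midpoint_mem_ninePointConic B C A v w u
  · exact hCAB ▸ midpoint_mem_ninePointConic C A B w u v
  · exact hBCA ▸ trace_mem_ninePointConic hABC.comm_left.comm_right hsum_BCA hv hX_BCA hE.1 hE.2
  · exact hCAB ▸ trace_mem_ninePointConic hABC.comm_right.comm_left hsum_CAB hw hX_CAB hF.1 hF.2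
  · exact hBCA ▸ midpoint_vertex_mem_ninePointConic hsum_BCA hX_BCA
  · exact hCAB ▸ midpoint_vertex_mem_ninePointConic hsum_CAB hX_CAB

lemma exists_affineEquiv_barycentric (hABC : AffineIndependent ℝ ![A, B, C]) :
    ∃ e : Pt ≃ᵃ[ℝ] Pt, ∀ s t : ℝ, e (s, t) = (1 - s - t) • A + s • B + t • C := by
  let L : Pt →ₗ[ℝ] Pt :=
    (LinearMap.toSpanSingleton ℝ Pt (B - A)).coprod (LinearMap.toSpanSingleton ℝ Pt (C - A))
  have hL (s t : ℝ) : L (s, t) = s • (B - A) + t • (C - A) := by simp [L]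
  have hinj : Function.Injective L := by
    refine (injective_iff_map_eq_zero L).2 fun ⟨s, t⟩ h ↦ ?_
    rw [hL] at h
    obtain ⟨-, rfl, rfl⟩ := eq_zero_of_smul_add_smul_add_smul_eq_zero hABC
      (α := -s - t) (β := s) (γ := t) (by ring) (by rw [← h]; module)
    rfl
  refine ⟨(LinearEquiv.ofInjectiveEndo L hinj).toAffineEquiv.trans
    (AffineEquiv.constVAdd ℝ Pt A), fun s t ↦ ?_⟩
  simp only [AffineEquiv.trans_apply, LinearEquiv.coe_toAffineEquiv,
    LinearEquiv.coe_ofInjectiveEndo, AffineEquiv.constVAdd_apply, vadd_eq_add, hL]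
  module

lemma isConic_ninePointConic (hABC : AffineIndependent ℝ ![A, B, C]) (hv : v ≠ 0) (hw : w ≠ 0) :
    IsConic (ninePointConic A B C u v w) := by
  obtain ⟨e, he⟩ := exists_affineEquiv_barycentric hABC
  -- The negated equation of the conic after substituting `(α, β, γ) = (1 - s - t, s, t)`.
  let c : Fin 6 → ℝ := ![2 * w * (u + v), 4 * v * w, 2 * v * (u + w),
    -(w * (u + 3 * v)), -(v * (u + 3 * w)), v * w]
  have hc (s t : ℝ) : qval c (s, t) = -(v * w * ((1 - s - t) * (s + t - (1 - s - t))) +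
      w * u * (s * (t + (1 - s - t) - s)) + u * v * (t * ((1 - s - t) + s - t))) := by
    simp only [c, qval, Matrix.cons_val]
    ring
  have hcoord : ninePointConic A B C u v w = e.symm ⁻¹' {p | qval c p = 0} := by
    ext p
    obtain ⟨⟨s, t⟩, rfl⟩ := e.surjective p
    simp only [Set.mem_preimage, AffineEquiv.symm_apply_apply, Set.mem_ofPred_eq, hc, neg_eq_zero]
    constructor
    · rintro ⟨α, β, γ, hsum, hp, h⟩
      rw [he] at hp
      obtain ⟨rfl, rfl, rfl⟩ := eq_of_barycentric_eq hABC (by rw [hsum]; ring) hp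
      exact h
    · exact fun h ↦ ⟨_, s, t, by ring, he s t, h⟩
  rw [hcoord]
  exact IsConic.preimage ⟨c, fun h ↦ by simp [c, hv, hw] at h, rfl⟩ e.symm

end NinePointConic

lemma homoth_cent_homoth_cent (A B C X : Pt) :
    homoth (cent A B C) (-(1 / 2)) (homoth (cent A B C) (-(1 / 2)) X) =
      (1 / 4 : ℝ) • (A + B + C + X) := by
  simp only [homoth, cent]
  module

lemma isotomic_coord_ne_one {x y z σ : ℝ} (hsum : x + y + z = 1) (hx0 : x ≠ 0) (hx1 : x ≠ 1)
    (hσ : x * y + y * z + z * x = σ) (hσ0 : σ ≠ 0) : y * z / σ ≠ 1 := by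
  intro h
  rw [div_eq_one_iff_eq hσ0, ← hσ] at h
  exact mul_ne_zero hx0 (sub_ne_zero.2 hx1) (by linear_combination h + x * hsum)

theorem nine_point_conic_of_ABCP'_and_circumconic
    (A B C P P' Q Q' D E F D₃ E₃ F₃ : Pt) (x y z : ℝ)
    (hABC : AffineIndependent ℝ ![A, B, C])
    (hsum : x + y + z = 1)
    (hPco : P = x • A + y • B + z • C)
    (hx0 : x ≠ 0) (hy0 : y ≠ 0) (hz0 : z ≠ 0)
    (hx1 : x ≠ 1) (hy1 : y ≠ 1) (hz1 : z ≠ 1)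
    (hst : x * y + y * z + z * x ≠ 0)
    (hP' : P' = (y * z / (x * y + y * z + z * x)) • A
        + (x * z / (x * y + y * z + z * x)) • B
        + (x * y / (x * y + y * z + z * x)) • C)
    (hQ : Q = homoth (cent A B C) (-(1 / 2)) P')
    (hQ' : Q' = homoth (cent A B C) (-(1 / 2)) P)
    (hD : Collinear ℝ {A, P, D} ∧ Collinear ℝ {B, C, D})
    (hE : Collinear ℝ {B, P, E} ∧ Collinear ℝ {A, C, E})
    (hF : Collinear ℝ {C, P, F} ∧ Collinear ℝ {A, B, F})
    (hD₃ : Collinear ℝ {A, P', D₃} ∧ Collinear ℝ {B, C, D₃})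
    (hE₃ : Collinear ℝ {B, P', E₃} ∧ Collinear ℝ {A, C, E₃})
    (hF₃ : Collinear ℝ {C, P', F₃} ∧ Collinear ℝ {A, B, F₃})
    (TP' : Pt ≃ᵃ[ℝ] Pt) (hTP' : TP' A = D₃ ∧ TP' B = E₃ ∧ TP' C = F₃) :
    ∃ N : Set Pt, IsConic N ∧
      midpoint ℝ B C ∈ N ∧ midpoint ℝ C A ∈ N ∧ midpoint ℝ A B ∈ N ∧
      D₃ ∈ N ∧ E₃ ∈ N ∧ F₃ ∈ N ∧
      midpoint ℝ A P' ∈ N ∧ midpoint ℝ B P' ∈ N ∧ midpoint ℝ C P' ∈ N ∧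
      IsCenterOf (homoth (cent A B C) (-(1 / 2)) Q) N ∧
      IsConic ((fun p => TP'.symm p) '' N) ∧
      A ∈ (fun p => TP'.symm p) '' N ∧ B ∈ (fun p => TP'.symm p) '' N ∧
      C ∈ (fun p => TP'.symm p) '' N ∧
      IsCenterOf (TP'.symm (homoth (cent A B C) (-(1 / 2)) Q)) ((fun p => TP'.symm p) '' N) := by
  obtain ⟨σ, hσ⟩ : ∃ σ, x * y + y * z + z * x = σ := ⟨_, rfl⟩
  rw [hσ] at hst hP'
  have hu1 := isotomic_coord_ne_one hsum hx0 hx1 hσ hst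
  have hv1 := isotomic_coord_ne_one (y := x) (z := z) (by linarith) hy0 hy1 (by linarith) hst
  have hw1 := isotomic_coord_ne_one (y := x) (z := y) (by linarith) hz0 hz1 (by linarith) hst
  have hv0 : x * z / σ ≠ 0 := div_ne_zero (mul_ne_zero hx0 hz0) hst
  have hw0 : x * y / σ ≠ 0 := div_ne_zero (mul_ne_zero hx0 hy0) hst
  have huvw : y * z / σ + x * z / σ + x * y / σ = 1 := by field_simp; linarith
  generalize y * z / σ = u, x * z / σ = v, x * y / σ = w at *
  rw [Set.insert_comm A C] at hE₃
  obtain ⟨⟨hBC, hCA, hAB⟩, ⟨hD₃N, hE₃N, hF₃N⟩, hAP', hBP', hCP'⟩ :=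
    nine_points_mem_ninePointConic hABC huvw hu1 hv1 hw1 hP' hD₃ hE₃ hF₃
  have hconic := isConic_ninePointConic (u := u) hABC hv0 hw0
  have hcenter := isCenterOf_ninePointConic huvw hP'
  rw [← homoth_cent_homoth_cent, ← hQ] at hcenter
  have himage (S : Set Pt) : (fun p ↦ TP'.symm p) '' S = TP' ⁻¹' S := TP'.image_symm S
  refine ⟨ninePointConic A B C u v w, hconic, hBC, hCA, hAB, hD₃N, hE₃N, hF₃N, hAP', hBP', hCP',
    hcenter, ?_⟩
  simp only [himage, Set.mem_preimage, hTP']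
  exact ⟨hconic.preimage TP', hD₃N, hE₃N, hF₃N,
    IsCenterOf.preimage TP'.toAffineMap (by simpa using hcenter)⟩
end
end

section
/- Let ABC be a scalene triangle in the Euclidean plane ℝ². Then the unique conic through A, B, C, the Gergonne point Ge, and the incenter I₀ (the Feuerbach hyperbola of ABC) also passes through the orthocenter H₀, the Nagel point Na, and the Mittenpunkt Mp of ABC. -/
noncomputable section

open scoped RealInnerProductSpace

/-- The Euclidean plane. -/
abbrev EPt : Type := EuclideanSpace ℝ (Fin 2)

/-- `S` is a conic in the Euclidean plane: the zero locus of a polynomial of total degree 2. -/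
def IsConic2 (S : Set EPt) : Prop :=
  ∃ c : Fin 6 → ℝ, ¬(c 0 = 0 ∧ c 1 = 0 ∧ c 2 = 0) ∧
    S = {p : EPt | c 0 * p 0 ^ 2 + c 1 * p 0 * p 1 + c 2 * p 1 ^ 2
          + c 3 * p 0 + c 4 * p 1 + c 5 = 0}

/-!
Let `u`, `v`, `w` be the lengths of the tangents from `A`, `B`, `C` to the incircle, so that the
sides are `v + w`, `w + u`, `u + v`. In homogeneous barycentric coordinates the five centers are
`Ge = (vw : wu : uv)`, `Na = (u : v : w)`, `I₀ = (v + w : w + u : u + v)`,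
`Mp = (u(v + w) : v(w + u) : w(u + v))` and `H₀ = (βγ : γα : αβ)`, where `α`, `β`, `γ` are the inner
products of the two sides at `A`, `B`, `C`. All five satisfy
`u(w² - v²)yz + v(u² - w²)zx + w(v² - u²)xy = 0`, the equation of a conic through `A`, `B`, `C`.
-/

section Barycentric

variable {k V P ι : Type*} [Field k] [AddCommGroup V] [Module k V] [AddTorsor V P]

/-- The finite family `w` is a system of homogeneous barycentric coordinates of the point `Q` with
respect to `T`: its sum is nonzero and normalizing it to sum `1` gives the coordinates of `Q`. -/
def HasBarycentricCoords [Fintype ι] (T : AffineBasis ι k P) (w : ι → k) (Q : P) : Prop :=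
  ∑ i, w i ≠ 0 ∧ ∀ i, (∑ j, w j) * T.coord i Q = w i

theorem hasBarycentricCoords_of_mul_coord_eq [Fintype ι] {T : AffineBasis ι k P} {w : ι → k}
    {Q : P} (hw : ∑ i, w i ≠ 0) (h : ∀ i j, w i * T.coord j Q = w j * T.coord i Q) :
    HasBarycentricCoords T w Q := by
  refine ⟨hw, fun i => ?_⟩
  rw [Finset.sum_mul, Finset.sum_congr rfl fun j _ => h j i, ← Finset.mul_sum,
    T.sum_coord_apply_eq_one, mul_one]

theorem hasBarycentricCoords_fin_three {T : AffineBasis (Fin 3) k P} {w : Fin 3 → k} {Q : P}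
    (hw : ∑ i, w i ≠ 0) (h₁ : (∑ i, w i) * T.coord 1 Q = w 1)
    (h₂ : (∑ i, w i) * T.coord 2 Q = w 2) : HasBarycentricCoords T w Q := by
  refine ⟨hw, fun i => ?_⟩
  have hsum := T.sum_coord_apply_eq_one Q
  rw [Fin.sum_univ_three] at hsum
  match i with
  | 0 => linear_combination (∑ i, w i) * hsum - h₁ - h₂ + Fin.sum_univ_three w
  | 1 => exact h₁
  | 2 => exact h₂

theorem mul_map_sub_eq_of_collinear {p q r : P} (h : Collinear k {p, q, r}) (f g : P →ᵃ[k] k) :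
    (f q - f p) * (g r - g p) = (g q - g p) * (f r - f p) := by
  obtain ⟨v, hv⟩ := (collinear_iff_of_mem (p₀ := p) (by simp)).1 h
  obtain ⟨s, rfl⟩ := hv q (by simp)
  obtain ⟨t, rfl⟩ := hv r (by simp)
  simp only [AffineMap.map_vadd, map_smul, smul_eq_mul, vadd_eq_add]
  ring

theorem vsub_eq_coord_smul_add_coord_smul (T : AffineBasis (Fin 3) k P) (Q : P) :
    Q -ᵥ T 0 = T.coord 1 Q • (T 1 -ᵥ T 0) + T.coord 2 Q • (T 2 -ᵥ T 0) := by
  have h := Finset.univ.sum_smul_vsub_const_eq_affineCombination_vsub (fun i => T.coord i Q) T (T 0)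
    (T.sum_coord_apply_eq_one Q)
  rw [T.affineCombination_coord_eq_self, Fin.sum_univ_three, vsub_self, smul_zero, zero_add] at h
  exact h.symm

theorem exists_affineBasis_of_affineIndependent (hV : Module.finrank k V = 2) {A B C : P}
    (h : AffineIndependent k ![A, B, C]) :
    ∃ T : AffineBasis (Fin 3) k P, T 0 = A ∧ T 1 = B ∧ T 2 = C := by
  have : FiniteDimensional k V := FiniteDimensional.of_finrank_eq_succ hV
  have hspan := h.affineSpan_eq_top_iff_card_eq_finrank_add_one.2 (by simp [hV])
  exact ⟨⟨![A, B, C], h, hspan⟩, rfl, rfl, rfl⟩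

theorem HasBarycentricCoords.complement [CharZero k] {T : AffineBasis (Fin 3) k V}
    {w : Fin 3 → k} {Q G M : V} (hQ : HasBarycentricCoords T w Q)
    (hG : G = (3⁻¹ : k) • (T 0 + T 1 + T 2)) (hM : M = G + (-(1 / 2) : k) • (Q - G)) :
    HasBarycentricCoords T (fun i => (∑ j, w j) - w i) M := by
  have hsum : ∑ i, ((∑ j, w j) - w i) = 2 * ∑ j, w j := by
    simp only [Fin.sum_univ_three]
    ring
  refine ⟨hsum ▸ mul_ne_zero two_ne_zero hQ.1, fun i => ?_⟩
  have hvertices : T.coord i (T 0) + T.coord i (T 1) + T.coord i (T 2) = 1 := by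
    fin_cases i <;> simp [T.coord_apply]
  have hcoord : 2 * T.coord i M = 1 - T.coord i Q := by
    rw [← hvertices, hM, hG, (T.coord i).decomp]
    simp only [Pi.add_apply, map_add, map_sub, map_smul, smul_eq_mul]
    ring
  rw [hsum]
  linear_combination (∑ j, w j) * hcoord - hQ.2 i

end Barycentric

section Circumconic

variable {k V P : Type*} [Field k] [AddCommGroup V] [Module k V] [AddTorsor V P]

/-- The conic through the vertices of the triangle `T` whose equation in barycentric coordinates
`x`, `y`, `z` is `κ₀yz + κ₁zx + κ₂xy = 0`. -/
def circumconic (T : AffineBasis (Fin 3) k P) (κ : Fin 3 → k) : Set P :=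
  {Q | κ 0 * T.coord 1 Q * T.coord 2 Q + κ 1 * T.coord 2 Q * T.coord 0 Q
    + κ 2 * T.coord 0 Q * T.coord 1 Q = 0}

theorem vertex_mem_circumconic (T : AffineBasis (Fin 3) k P) (κ : Fin 3 → k) (i : Fin 3) :
    T i ∈ circumconic T κ := by
  fin_cases i <;> simp [circumconic, T.coord_apply]

theorem HasBarycentricCoords.mem_circumconic {T : AffineBasis (Fin 3) k P} {κ w : Fin 3 → k} {Q : P}
    (hQ : HasBarycentricCoords T w Q)
    (h : κ 0 * w 1 * w 2 + κ 1 * w 2 * w 0 + κ 2 * w 0 * w 1 = 0) : Q ∈ circumconic T κ := by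
  obtain ⟨hw, hcoord⟩ := hQ
  rw [← hcoord 0, ← hcoord 1, ← hcoord 2] at h
  refine (mul_eq_zero.1 (?_ : (∑ i, w i) ^ 2 * _ = 0)).resolve_left (pow_ne_zero 2 hw)
  linear_combination h

end Circumconic

theorem exists_affineMap_eq_mul_add_mul_add (f : EPt →ᵃ[ℝ] ℝ) :
    ∃ a b c : ℝ, ∀ p, f p = a * p 0 + b * p 1 + c := by
  refine ⟨f.linear (EuclideanSpace.single 0 1), f.linear (EuclideanSpace.single 1 1), f 0,
    fun p => ?_⟩
  have hp : p = p 0 • EuclideanSpace.single 0 1 + p 1 • EuclideanSpace.single 1 1 := by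
    ext i
    fin_cases i <;> simp
  conv_lhs => rw [f.decomp, hp]
  simp [mul_comm]

theorem isConic2_circumconic (T : AffineBasis (Fin 3) ℝ EPt) {κ : Fin 3 → ℝ} (hκ : κ ≠ 0) :
    IsConic2 (circumconic T κ) := by
  choose a b c hcoord using fun i => exists_affineMap_eq_mul_add_mul_add (T.coord i)
  refine ⟨![κ 0 * a 1 * a 2 + κ 1 * a 2 * a 0 + κ 2 * a 0 * a 1,
    κ 0 * (a 1 * b 2 + b 1 * a 2) + κ 1 * (a 2 * b 0 + b 2 * a 0) + κ 2 * (a 0 * b 1 + b 0 * a 1),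
    κ 0 * b 1 * b 2 + κ 1 * b 2 * b 0 + κ 2 * b 0 * b 1,
    κ 0 * (a 1 * c 2 + c 1 * a 2) + κ 1 * (a 2 * c 0 + c 2 * a 0) + κ 2 * (a 0 * c 1 + c 0 * a 1),
    κ 0 * (b 1 * c 2 + c 1 * b 2) + κ 1 * (b 2 * c 0 + c 2 * b 0) + κ 2 * (b 0 * c 1 + c 0 * b 1),
    κ 0 * c 1 * c 2 + κ 1 * c 2 * c 0 + κ 2 * c 0 * c 1], ?_, ?_⟩
  · -- On the direction of the side opposite to `T i` the quadratic part takes the value `-κ i`.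
    rintro ⟨h₀, h₁, h₂⟩
    simp only [Matrix.cons_val] at h₀ h₁ h₂
    have hform (x y : ℝ) : κ 0 * (a 1 * x + b 1 * y) * (a 2 * x + b 2 * y)
        + κ 1 * (a 2 * x + b 2 * y) * (a 0 * x + b 0 * y)
        + κ 2 * (a 0 * x + b 0 * y) * (a 1 * x + b 1 * y) = 0 := by
      linear_combination x ^ 2 * h₀ + x * y * h₁ + y ^ 2 * h₂
    have hdir (i j l : Fin 3) : a i * (T j 0 - T l 0) + b i * (T j 1 - T l 1) =
        (if i = j then 1 else 0) - if i = l then 1 else 0 := by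
      rw [← T.coord_apply i j, ← T.coord_apply i l, hcoord, hcoord]
      ring
    have hside (j l : Fin 3) := hform (T j 0 - T l 0) (T j 1 - T l 1)
    simp only [hdir] at hside
    apply hκ
    ext i
    fin_cases i
    · simpa using hside 1 2
    · simpa using hside 2 0
    · simpa using hside 0 1
  · ext p
    simp only [circumconic, hcoord, Set.mem_ofPred_eq, Matrix.cons_val]
    apply Eq.congr_left
    ring

section StrictConvex

variable {V P : Type*} [NormedAddCommGroup V] [NormedSpace ℝ V] [StrictConvexSpace ℝ V]
  [MetricSpace P] [NormedAddTorsor V P]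

theorem dist_mul_map_eq_of_dist_add_dist_eq {B C X : P} (h : dist B X + dist C X = dist B C)
    (f : P →ᵃ[ℝ] ℝ) : dist B C * f X = dist C X * f B + dist B X * f C := by
  rw [dist_comm C X] at h ⊢
  obtain ⟨t, ⟨ht₀, ht₁⟩, rfl⟩ := dist_add_dist_eq_iff.1 h
  rw [dist_left_lineMap, dist_lineMap_right, Real.norm_of_nonneg ht₀,
    Real.norm_of_nonneg (sub_nonneg.2 ht₁), f.apply_lineMap, AffineMap.lineMap_apply_ring']
  ring

theorem mul_coord_eq_of_cevian {ι : Type*} (T : AffineBasis ι ℝ P) {i j l : ι} (hij : i ≠ j)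
    (hil : i ≠ l) (hjl : j ≠ l) {X Q : P} (hX : dist (T j) X + dist (T l) X = dist (T j) (T l))
    (hQ : Collinear ℝ {T i, X, Q}) {a b : ℝ} (hab : dist (T j) X * a = dist (T l) X * b) :
    a * T.coord l Q = b * T.coord j Q := by
  have hj := dist_mul_map_eq_of_dist_add_dist_eq hX (T.coord j)
  have hl := dist_mul_map_eq_of_dist_add_dist_eq hX (T.coord l)
  have hcol := mul_map_sub_eq_of_collinear hQ (T.coord j) (T.coord l)
  simp only [T.coord_apply_eq, T.coord_apply_ne hjl, T.coord_apply_ne hjl.symm,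
    T.coord_apply_ne hij.symm, T.coord_apply_ne hil.symm, sub_zero, mul_zero, mul_one, add_zero,
    zero_add] at hj hl hcol
  have hne : dist (T j) (T l) ≠ 0 := dist_ne_zero.2 (T.ind.injective.ne hjl)
  have hratio : dist (T j) X * T.coord j Q = dist (T l) X * T.coord l Q := by
    rw [← hj, ← hl, mul_assoc, mul_assoc, hcol]
  apply mul_left_cancel₀ hne
  rw [← hX]
  linear_combination (T.coord l Q + T.coord j Q) * hab - (a + b) * hratio

theorem hasBarycentricCoords_of_cevians {T : AffineBasis (Fin 3) ℝ P} {m : Fin 3 → ℝ}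
    (hm : ∑ i, m i ≠ 0) {X Y W Q : P}
    (hX : dist (T 1) X + dist (T 2) X = dist (T 1) (T 2))
    (hY : dist (T 2) Y + dist (T 0) Y = dist (T 2) (T 0))
    (hW : dist (T 0) W + dist (T 1) W = dist (T 0) (T 1))
    (hQ : Collinear ℝ {T 0, X, Q} ∧ Collinear ℝ {T 1, Y, Q} ∧ Collinear ℝ {T 2, W, Q})
    (hmX : dist (T 1) X * m 1 = dist (T 2) X * m 2)
    (hmY : dist (T 2) Y * m 2 = dist (T 0) Y * m 0)
    (hmW : dist (T 0) W * m 0 = dist (T 1) W * m 1) : HasBarycentricCoords T m Q := by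
  have hA := mul_coord_eq_of_cevian T (by decide) (by decide) (by decide) hX hQ.1 hmX
  have hB := mul_coord_eq_of_cevian T (by decide) (by decide) (by decide) hY hQ.2.1 hmY
  have hC := mul_coord_eq_of_cevian T (by decide) (by decide) (by decide) hW hQ.2.2 hmW
  refine hasBarycentricCoords_of_mul_coord_eq hm fun i j => ?_
  fin_cases i <;> fin_cases j <;> first | rfl | assumption | (symm; assumption)

end StrictConvex

section InnerProduct

variable {V P : Type*} [NormedAddCommGroup V] [InnerProductSpace ℝ V]

theorem gram_mul_eq_of_eq_smul_add_smul {p q r : V} {y z : ℝ} (h : r = y • p + z • q) :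
    (‖p‖ ^ 2 * ‖q‖ ^ 2 - ⟪p, q⟫ ^ 2) * y = ‖q‖ ^ 2 * ⟪r, p⟫ - ⟪p, q⟫ * ⟪r, q⟫ := by
  simp only [h, inner_add_left, real_inner_smul_left, real_inner_comm p q,
    real_inner_self_eq_norm_sq]
  ring

variable [MetricSpace P] [NormedAddTorsor V P]

theorem real_inner_vsub_vsub_eq_dist_sq (A B C : P) :
    ⟪B -ᵥ A, C -ᵥ A⟫ = (dist A B ^ 2 + dist A C ^ 2 - dist B C ^ 2) / 2 := by
  rw [real_inner_eq_norm_mul_self_add_norm_mul_self_sub_norm_sub_mul_self_div_two,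
    vsub_sub_vsub_cancel_right, ← dist_eq_norm_vsub, ← dist_eq_norm_vsub, ← dist_eq_norm_vsub,
    dist_comm B A, dist_comm C A]
  ring

theorem inner_vsub_eq_dist_mul_dist {A B W I : P} (hW : dist A W + dist B W = dist A B)
    (hI : ⟪W -ᵥ I, B -ᵥ A⟫ = 0) : ⟪I -ᵥ A, B -ᵥ A⟫ = dist A W * dist A B := by
  have hfoot : ⟪I -ᵥ A, B -ᵥ A⟫ = ⟪W -ᵥ A, B -ᵥ A⟫ := by
    rw [← vsub_add_vsub_cancel W I A, inner_add_left, hI, zero_add]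
  rw [hfoot, real_inner_vsub_vsub_eq_dist_sq, dist_comm W B, ← hW]
  ring

end InnerProduct

/-- `u`, `v`, `w` are the lengths of the tangents from `A`, `B`, `C` to the incircle of `ABC`,
characterized by the lengths of the sides. -/
structure HasTangentLengths {P : Type*} [PseudoMetricSpace P] (A B C : P) (u v w : ℝ) : Prop where
  dist_BC : dist B C = v + w
  dist_CA : dist C A = w + u
  dist_AB : dist A B = u + v

namespace HasTangentLengths

section StrictConvex

variable {V P : Type*} [NormedAddCommGroup V] [NormedSpace ℝ V] [StrictConvexSpace ℝ V]
  [MetricSpace P] [NormedAddTorsor V P] {u v w : ℝ}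

theorem pos {T : Fin 3 → P} (h : HasTangentLengths (T 0) (T 1) (T 2) u v w)
    (hT : AffineIndependent ℝ T) : 0 < u ∧ 0 < v ∧ 0 < w := by
  obtain ⟨ha, hb, hc⟩ := h
  have htri (i j l : Fin 3) (hijl : Function.Injective ![i, j, l]) :
      dist (T i) (T l) < dist (T i) (T j) + dist (T j) (T l) :=
    dist_lt_dist_add_dist_iff.2 (hT.not_wbtw_of_injective i j l hijl)
  have hu := htri 1 0 2 (by decide)
  have hv := htri 2 1 0 (by decide)
  have hw := htri 0 2 1 (by decide)
  simp only [dist_comm (T 1) (T 0), dist_comm (T 2) (T 1), dist_comm (T 0) (T 2), ha, hb, hc]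
    at hu hv hw
  refine ⟨?_, ?_, ?_⟩ <;> linarith

variable {T : AffineBasis (Fin 3) ℝ P}

theorem hasBarycentricCoords_gergonne (h : HasTangentLengths (T 0) (T 1) (T 2) u v w)
    {X Y W Q : P} (hX : dist (T 1) X = v ∧ dist (T 2) X = w)
    (hY : dist (T 2) Y = w ∧ dist (T 0) Y = u) (hW : dist (T 0) W = u ∧ dist (T 1) W = v)
    (hQ : Collinear ℝ {T 0, X, Q} ∧ Collinear ℝ {T 1, Y, Q} ∧ Collinear ℝ {T 2, W, Q}) :
    HasBarycentricCoords T ![v * w, w * u, u * v] Q := by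
  obtain ⟨hu, hv, hw⟩ := h.pos T.ind
  obtain ⟨ha, hb, hc⟩ := h
  have hsum : v * w + w * u + u * v ≠ 0 := by positivity
  refine hasBarycentricCoords_of_cevians ?_ ?_ ?_ ?_ hQ ?_ ?_ ?_ <;>
    simp only [hX, hY, hW, ha, hb, hc, Fin.sum_univ_three, Matrix.cons_val]
  · exact hsum
  all_goals ring

theorem hasBarycentricCoords_nagel (h : HasTangentLengths (T 0) (T 1) (T 2) u v w)
    {X Y W Q : P} (hX : dist (T 1) X = w ∧ dist (T 2) X = v)
    (hY : dist (T 2) Y = u ∧ dist (T 0) Y = w) (hW : dist (T 0) W = v ∧ dist (T 1) W = u)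
    (hQ : Collinear ℝ {T 0, X, Q} ∧ Collinear ℝ {T 1, Y, Q} ∧ Collinear ℝ {T 2, W, Q}) :
    HasBarycentricCoords T ![u, v, w] Q := by
  obtain ⟨hu, hv, hw⟩ := h.pos T.ind
  obtain ⟨ha, hb, hc⟩ := h
  have hsum : u + v + w ≠ 0 := by positivity
  refine hasBarycentricCoords_of_cevians ?_ ?_ ?_ ?_ hQ ?_ ?_ ?_ <;>
    simp only [hX, hY, hW, ha, hb, hc, Fin.sum_univ_three, Matrix.cons_val]
  · exact hsum
  all_goals ring

end StrictConvex

section InnerProduct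

variable {V P : Type*} [NormedAddCommGroup V] [InnerProductSpace ℝ V] [MetricSpace P]
  [NormedAddTorsor V P] {u v w : ℝ}

theorem inner_vsub_vsub {A B C : P} (h : HasTangentLengths A B C u v w) :
    ⟪B -ᵥ A, C -ᵥ A⟫ = u * (u + v + w) - v * w := by
  rw [real_inner_vsub_vsub_eq_dist_sq, dist_comm A C, h.dist_BC, h.dist_CA, h.dist_AB]
  ring

variable {T : AffineBasis (Fin 3) ℝ P}

theorem mul_coord_one (h : HasTangentLengths (T 0) (T 1) (T 2) u v w) (Q : P) :
    4 * (u + v + w) * u * v * w * T.coord 1 Q = (w + u) ^ 2 * ⟪Q -ᵥ T 0, T 1 -ᵥ T 0⟫ -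
      (u * (u + v + w) - v * w) * ⟪Q -ᵥ T 0, T 2 -ᵥ T 0⟫ := by
  have hcramer := gram_mul_eq_of_eq_smul_add_smul (vsub_eq_coord_smul_add_coord_smul T Q)
  rw [h.inner_vsub_vsub, ← dist_eq_norm_vsub, ← dist_eq_norm_vsub, dist_comm (T 1), h.dist_AB,
    h.dist_CA] at hcramer
  linear_combination hcramer

theorem mul_coord_two (h : HasTangentLengths (T 0) (T 1) (T 2) u v w) (Q : P) :
    4 * (u + v + w) * u * v * w * T.coord 2 Q = (u + v) ^ 2 * ⟪Q -ᵥ T 0, T 2 -ᵥ T 0⟫ -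
      (u * (u + v + w) - v * w) * ⟪Q -ᵥ T 0, T 1 -ᵥ T 0⟫ := by
  have hcramer := gram_mul_eq_of_eq_smul_add_smul
    ((vsub_eq_coord_smul_add_coord_smul T Q).trans (add_comm _ _))
  rw [real_inner_comm (T 1 -ᵥ T 0), h.inner_vsub_vsub, ← dist_eq_norm_vsub, ← dist_eq_norm_vsub,
    dist_comm (T 1), h.dist_AB, h.dist_CA] at hcramer
  linear_combination hcramer

theorem hasBarycentricCoords_incenter (h : HasTangentLengths (T 0) (T 1) (T 2) u v w)
    {Y W I : P} (hY : dist (T 2) Y = w ∧ dist (T 0) Y = u)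
    (hW : dist (T 0) W = u ∧ dist (T 1) W = v)
    (hIY : ⟪Y -ᵥ I, T 0 -ᵥ T 2⟫ = 0) (hIW : ⟪W -ᵥ I, T 1 -ᵥ T 0⟫ = 0) :
    HasBarycentricCoords T ![v + w, w + u, u + v] I := by
  obtain ⟨hu, hv, hw⟩ := h.pos T.ind
  have hB : ⟪I -ᵥ T 0, T 1 -ᵥ T 0⟫ = u * (u + v) := by
    rw [inner_vsub_eq_dist_mul_dist (by rw [hW.1, hW.2, h.dist_AB]) hIW, hW.1, h.dist_AB]
  have hC : ⟪I -ᵥ T 0, T 2 -ᵥ T 0⟫ = u * (w + u) := by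
    have hY' : dist (T 0) Y + dist (T 2) Y = dist (T 0) (T 2) := by
      rw [hY.1, hY.2, dist_comm, h.dist_CA, add_comm]
    rw [← neg_vsub_eq_vsub_rev (T 2), inner_neg_right, neg_eq_zero] at hIY
    rw [inner_vsub_eq_dist_mul_dist hY' hIY, hY.2, dist_comm, h.dist_CA]
  have hy := h.mul_coord_one I
  have hz := h.mul_coord_two I
  rw [hB, hC] at hy hz
  have huvw : 2 * u * v * w ≠ 0 := by positivity
  have hsum : ∑ i, ![v + w, w + u, u + v] i = 2 * (u + v + w) := by
    simp only [Fin.sum_univ_three, Matrix.cons_val]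
    ring
  refine hasBarycentricCoords_fin_three ?_ ?_ ?_ <;> rw [hsum]
  · positivity
  all_goals
    apply mul_left_cancel₀ huvw
    simp only [Matrix.cons_val]
  · linear_combination hy
  · linear_combination hz

theorem hasBarycentricCoords_orthocenter (h : HasTangentLengths (T 0) (T 1) (T 2) u v w) {H : P}
    (hA : ⟪H -ᵥ T 0, T 2 -ᵥ T 1⟫ = 0) (hB : ⟪H -ᵥ T 1, T 2 -ᵥ T 0⟫ = 0) {α β γ : ℝ}
    (hα : α = u * (u + v + w) - v * w) (hβ : β = v * (u + v + w) - w * u)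
    (hγ : γ = w * (u + v + w) - u * v) : HasBarycentricCoords T ![β * γ, γ * α, α * β] H := by
  obtain ⟨hu, hv, hw⟩ := h.pos T.ind
  have hAC : ⟪H -ᵥ T 0, T 2 -ᵥ T 0⟫ = α := by
    rw [← vsub_add_vsub_cancel H (T 1), inner_add_left, hB, zero_add, h.inner_vsub_vsub, hα]
  have hAB : ⟪H -ᵥ T 0, T 1 -ᵥ T 0⟫ = α := by
    rw [← sub_eq_zero, ← hAC, ← inner_sub_right, vsub_sub_vsub_cancel_right,
      ← neg_vsub_eq_vsub_rev (T 2), inner_neg_right, hA, neg_zero]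
  have hy := h.mul_coord_one H
  have hz := h.mul_coord_two H
  rw [hAB, hAC, ← hα] at hy hz
  have hsum : ∑ i, ![β * γ, γ * α, α * β] i = 4 * (u + v + w) * u * v * w := by
    simp only [Fin.sum_univ_three, Matrix.cons_val, hα, hβ, hγ]
    ring
  refine hasBarycentricCoords_fin_three ?_ ?_ ?_ <;> rw [hsum]
  · positivity
  · simp only [hy, hα, hγ, Matrix.cons_val]
    ring
  · simp only [hz, hα, hβ, Matrix.cons_val]
    ring

end InnerProduct

end HasTangentLengths

/-- The coefficients of the barycentric equation of the Feuerbach hyperbola of a triangle with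
tangent lengths `u`, `v`, `w`. -/
def feuerbachCoeff (u v w : ℝ) : Fin 3 → ℝ :=
  ![u * (w ^ 2 - v ^ 2), v * (u ^ 2 - w ^ 2), w * (v ^ 2 - u ^ 2)]

theorem feuerbachCoeff_ne_zero {u v w : ℝ} (hu : 0 < u) (hv : 0 < v) (hw : 0 < w)
    (hne : ¬(u = v ∧ v = w)) : feuerbachCoeff u v w ≠ 0 := by
  intro h
  have h₀ : u * (w ^ 2 - v ^ 2) = 0 := congrFun h 0
  have h₂ : w * (v ^ 2 - u ^ 2) = 0 := congrFun h 2
  have hwv := sub_eq_zero.1 ((mul_eq_zero.1 h₀).resolve_left hu.ne')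
  have hvu := sub_eq_zero.1 ((mul_eq_zero.1 h₂).resolve_left hw.ne')
  rw [pow_left_inj₀ hw.le hv.le two_ne_zero] at hwv
  rw [pow_left_inj₀ hv.le hu.le two_ne_zero] at hvu
  exact hne ⟨hvu.symm, hwv.symm⟩

theorem feuerbach_hyperbola_through_orthocenter_nagel_mittenpunkt_general
    {A B C : EPt} (hABC : AffineIndependent ℝ ![A, B, C])
    (hne : ¬(dist B C = dist C A ∧ dist C A = dist A B))
    {u v w : ℝ} (h : HasTangentLengths A B C u v w) {X Y W : EPt}
    (hX : dist B X = v ∧ dist C X = w)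
    (hY : dist C Y = w ∧ dist A Y = u)
    (hW : dist A W = u ∧ dist B W = v)
    {I₀ : EPt} (hI₀ : ⟪Y - I₀, A - C⟫ = 0 ∧ ⟪W - I₀, B - A⟫ = 0)
    {Ge : EPt} (hGe : Collinear ℝ {A, X, Ge} ∧ Collinear ℝ {B, Y, Ge} ∧ Collinear ℝ {C, W, Ge})
    {H₀ : EPt} (hH₀ : ⟪H₀ - A, C - B⟫ = 0 ∧ ⟪H₀ - B, C - A⟫ = 0)
    {XA YB WC : EPt}
    (hXA : dist B XA = w ∧ dist C XA = v)
    (hYB : dist C YB = u ∧ dist A YB = w)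
    (hWC : dist A WC = v ∧ dist B WC = u)
    {Na : EPt} (hNa : Collinear ℝ {A, XA, Na} ∧ Collinear ℝ {B, YB, Na} ∧ Collinear ℝ {C, WC, Na})
    {G Mp : EPt} (hG : G = (3⁻¹ : ℝ) • (A + B + C)) (hMp : Mp = G + (-(1 / 2) : ℝ) • (Ge - G)) :
    ∃ S, IsConic2 S ∧ (A ∈ S ∧ B ∈ S ∧ C ∈ S ∧ Ge ∈ S ∧ I₀ ∈ S) ∧ H₀ ∈ S ∧ Na ∈ S ∧ Mp ∈ S := by
  obtain ⟨T, rfl, rfl, rfl⟩ := exists_affineBasis_of_affineIndependent (by simp) hABC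
  obtain ⟨hu, hv, hw⟩ := h.pos T.ind
  have hκ : feuerbachCoeff u v w ≠ 0 := feuerbachCoeff_ne_zero hu hv hw <| by
    rintro ⟨rfl, rfl⟩
    exact hne ⟨h.dist_BC.trans h.dist_CA.symm, h.dist_CA.trans h.dist_AB.symm⟩
  have hGe' := h.hasBarycentricCoords_gergonne hX hY hW hGe
  have hI₀' := h.hasBarycentricCoords_incenter hY hW hI₀.1 hI₀.2
  have hH₀' := h.hasBarycentricCoords_orthocenter hH₀.1 hH₀.2 rfl rfl rfl
  have hNa' := h.hasBarycentricCoords_nagel hXA hYB hWC hNa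
  have hMp' := hGe'.complement hG hMp
  have hvertex := vertex_mem_circumconic T (feuerbachCoeff u v w)
  refine ⟨circumconic T (feuerbachCoeff u v w), isConic2_circumconic T hκ,
    ⟨hvertex 0, hvertex 1, hvertex 2, hGe'.mem_circumconic ?_, hI₀'.mem_circumconic ?_⟩,
    hH₀'.mem_circumconic ?_, hNa'.mem_circumconic ?_, hMp'.mem_circumconic ?_⟩
  all_goals
    simp only [feuerbachCoeff, Fin.sum_univ_three, Matrix.cons_val]
    ring

theorem feuerbach_hyperbola_through_orthocenter_nagel_mittenpunkt
    (A B C : EPt)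
    (hABC : AffineIndependent ℝ ![A, B, C])
    (hsc1 : dist B C ≠ dist C A) (hsc2 : dist C A ≠ dist A B) (hsc3 : dist B C ≠ dist A B)
    (s : ℝ) (hs : s = (dist B C + dist C A + dist A B) / 2)
    (X Y W : EPt)
    (hX : Collinear ℝ {B, C, X} ∧ dist B X = s - dist C A ∧ dist C X = s - dist A B)
    (hY : Collinear ℝ {C, A, Y} ∧ dist C Y = s - dist A B ∧ dist A Y = s - dist B C)
    (hW : Collinear ℝ {A, B, W} ∧ dist A W = s - dist B C ∧ dist B W = s - dist C A)
    (I₀ : EPt)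
    (hI₀ : ⟪X - I₀, C - B⟫ = 0 ∧ ⟪Y - I₀, A - C⟫ = 0 ∧ ⟪W - I₀, B - A⟫ = 0)
    (Ge : EPt)
    (hGe : Collinear ℝ {A, X, Ge} ∧ Collinear ℝ {B, Y, Ge} ∧ Collinear ℝ {C, W, Ge})
    (H₀ : EPt)
    (hH₀ : ⟪H₀ - A, C - B⟫ = 0 ∧ ⟪H₀ - B, C - A⟫ = 0)
    (XA YB WC : EPt)
    (hXA : Collinear ℝ {B, C, XA} ∧ dist B XA = s - dist A B ∧ dist C XA = s - dist C A)
    (hYB : Collinear ℝ {C, A, YB} ∧ dist C YB = s - dist B C ∧ dist A YB = s - dist A B)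
    (hWC : Collinear ℝ {A, B, WC} ∧ dist A WC = s - dist C A ∧ dist B WC = s - dist B C)
    (Na : EPt)
    (hNa : Collinear ℝ {A, XA, Na} ∧ Collinear ℝ {B, YB, Na} ∧ Collinear ℝ {C, WC, Na})
    (G Mp : EPt)
    (hG : G = (3⁻¹ : ℝ) • (A + B + C))
    (hMp : Mp = G + (-(1 / 2) : ℝ) • (Ge - G))
    (Feu : Set EPt)
    (hFeu : IsConic2 Feu)
    (hAF : A ∈ Feu) (hBF : B ∈ Feu) (hCF : C ∈ Feu) (hGeF : Ge ∈ Feu) (hIF : I₀ ∈ Feu)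
    (huniq : ∀ S : Set EPt, IsConic2 S →
      A ∈ S → B ∈ S → C ∈ S → Ge ∈ S → I₀ ∈ S → S = Feu) :
    H₀ ∈ Feu ∧ Na ∈ Feu ∧ Mp ∈ Feu := by
  have hlen : HasTangentLengths A B C (s - dist B C) (s - dist C A) (s - dist A B) := by
    constructor <;> linarith
  obtain ⟨S, hS, ⟨hA, hB, hC, hGe', hI₀'⟩, hcenters⟩ :=
    feuerbach_hyperbola_through_orthocenter_nagel_mittenpunkt_general hABC (fun h => hsc1 h.1) hlen
      hX.2 hY.2 hW.2 hI₀.2 hGe hH₀ hXA.2 hYB.2 hWC.2 hNa hG hMp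
  rwa [huniq S hS hA hB hC hGe' hI₀'] at hcenters
end
end
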